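/- For every integer n ≥ 3 and every pair of adjacent vertices x, y of the n-dimensional varietal hypercube VQ_n, there exists an xy-path of every length ℓ with 1 ≤ ℓ ≤ 2^n − 1 and ℓ ∉ {2, 4}. -/

import Mathlib

/-- The relation `I = {(00,00),(01,01),(10,11),(11,10)}` on pairs of bits,
where a pair `(a, b)` records two consecutive bits (higher bit first). -/
def vqCross (p q : Bool × Bool) : Prop :=
  (p = (false, false) ∧ q = (false, false)) ∨
  (p = (false, true) ∧ q = (false, true)) ∨
  (p = (true, false) ∧ q = (true, true)) ∨
  (p = (true, true) ∧ q = (true, false))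

/-- Adjacency in the varietal hypercube `VQ n`.  A vertex is a function
`Fin n → Bool`, the bit `x_k` (1-indexed, `x = x_n x_{n-1} ⋯ x_1`) being
the value at index `k - 1`; the leading bit `x_n` is at index `n - 1`. -/
def vqAdj : (n : ℕ) → (Fin n → Bool) → (Fin n → Bool) → Prop
  | 0, _, _ => False
  | 1, x, y => x ≠ y
  | (n + 2), x, y =>
    if x (Fin.last (n + 1)) = y (Fin.last (n + 1)) then
      -- both in the same copy of `VQ (n+1)`
      vqAdj (n + 1) (fun i => x i.castSucc) (fun i => y i.castSucc)
    else
      if 3 ∣ (n + 2) then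
        (∀ i : Fin (n + 2), i.val < n - 1 → x i = y i) ∧
        vqCross (x ⟨n, by omega⟩, x ⟨n - 1, by omega⟩)
          (y ⟨n, by omega⟩, y ⟨n - 1, by omega⟩)
      else
        ∀ i : Fin (n + 1), x i.castSucc = y i.castSucc

/-- The `n`-dimensional varietal hypercube `VQ_n`. -/
def varietalCube (n : ℕ) : SimpleGraph (Fin n → Bool) :=
  SimpleGraph.fromRel (vqAdj n)

/-!
`VQ_{n+1}` is a generalized prism: two copies of `VQ_n` joined by the matching `u — f u`, for an
involution `f` that either is the identity or acts on each of the two copies of `VQ_{n-1}` inside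
`VQ_n` as an automorphism (the identity or the flip of the leading bit). Hence all edges of `VQ_n`
that `f` fails to map to edges are in the leading direction, and so they form a matching.

Suppose that adjacent vertices of `VQ_n` are joined by paths of all lengths up to `2 ^ n - 1` but
`2` and `4`. For an edge inside a copy of `VQ_n`, long paths arise from a path in that copy by
replacing an edge `u v` that `f` maps to an edge with a detour through `f u` and `f v` in the other
copy. For a matching edge `u — f u`, walk from `u` to a suitable neighbour `v`, cross over to `f v`
and walk on to `f u`. The one length missed by this, namely `6 = 1 + 1 + 4`, is supplied by a
5-cycle through `u` whose edges `f` maps to edges. The induction starts at `VQ_3`, which is the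
Möbius ladder on eight vertices.
-/

section Paths

open SimpleGraph

variable {V W : Type*} {G : SimpleGraph V} {H : SimpleGraph W} {x y : V} {k : ℕ}

theorem isPath_append_cons_iff {u v w t : V} {p : G.Walk u v} {q : G.Walk w t} (h : G.Adj v w) :
    (p.append (.cons h q)).IsPath ↔ p.IsPath ∧ q.IsPath ∧ p.support.Disjoint q.support := by
  simp only [Walk.isPath_def, Walk.support_append, Walk.support_cons, List.tail_cons,
    List.nodup_append']

/-- `K` contains an edge of every path of length two in `G`. For `K ≤ G` this says that the edges of
`G` outside `K` form a matching. -/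
def MeetsTwoPaths (K G : SimpleGraph V) : Prop :=
  ∀ ⦃u v w⦄, G.Adj u v → G.Adj v w → u ≠ w → K.Adj u v ∨ K.Adj v w

theorem MeetsTwoPaths.exists_eq_append_cons {K : SimpleGraph V} (hK : MeetsTwoPaths K G)
    {p : G.Walk x y} (hp : p.IsPath) (hlen : 2 ≤ p.length) :
    ∃ (u v : V) (h : G.Adj u v) (p₁ : G.Walk x u) (p₂ : G.Walk v y),
      p = p₁.append (.cons h p₂) ∧ K.Adj u v := by
  match p, hp, hlen with
  | .cons (v := v) h (.cons (v := w) h' p), hp, _ =>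
    have hxw : x ≠ w := by
      rintro rfl
      simp at hp
    rcases hK h h' hxw with hxv | hvw
    · exact ⟨x, v, h, .nil, .cons h' p, rfl, hxv⟩
    · exact ⟨v, w, h', .cons h .nil, p, rfl, hvw⟩

/-- There is a path of length `k` from `x` to `y` in `G`. -/
def HasPath (G : SimpleGraph V) (x y : V) (k : ℕ) : Prop :=
  ∃ p : G.Walk x y, p.IsPath ∧ p.length = k

namespace HasPath

theorem of_adj (h : G.Adj x y) : HasPath G x y 1 :=
  ⟨h.toWalk, by simp [h.ne], rfl⟩

theorem of_isChain {l : List V} (hne : l ≠ []) (hchain : l.IsChain G.Adj) (hnodup : l.Nodup) :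
    HasPath G (l.head hne) (l.getLast hne) (l.length - 1) :=
  ⟨.ofSupport l hne hchain, by rwa [Walk.isPath_def, Walk.support_ofSupport],
    Walk.length_ofSupport hne hchain⟩

theorem symm (h : HasPath G x y k) : HasPath G y x k := by
  obtain ⟨p, hp, rfl⟩ := h
  exact ⟨p.reverse, hp.reverse, p.length_reverse⟩

theorem map (e : G →g H) (he : Function.Injective e) (h : HasPath G x y k) :
    HasPath H (e x) (e y) k := by
  obtain ⟨p, hp, rfl⟩ := h
  exact ⟨p.map e, hp.map he, p.length_map e⟩

end HasPath

/-- Every edge of `G` lies on a cycle of every length from `4` to `N`, except possibly `5`; stated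
through the path left over when the edge is removed from the cycle. For `N = |V|` this is
edge-pancyclicity up to the lengths `3` and `5`. -/
def AlmostEdgePancyclic (G : SimpleGraph V) (N : ℕ) : Prop :=
  ∀ ⦃x y⦄, G.Adj x y → ∀ ⦃k⦄, 1 ≤ k → k < N → k ≠ 2 → k ≠ 4 → HasPath G x y k

theorem AlmostEdgePancyclic.of_iso {N : ℕ} (hG : AlmostEdgePancyclic G N) (e : G ≃g H) :
    AlmostEdgePancyclic H N := by
  intro x y hxy k hk hkN h2 h4
  simpa using (hG (e.symm.map_adj_iff.2 hxy) hk hkN h2 h4).map e.toHom e.injective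

/-- The vertex `u` lies on a cycle of length five in `G`. -/
def LiesOnFiveCycle (G : SimpleGraph V) (u : V) : Prop :=
  ∃ v, G.Adj u v ∧ HasPath G u v 4

theorem LiesOnFiveCycle.map (e : G →g H) (he : Function.Injective e)
    (h : LiesOnFiveCycle G x) : LiesOnFiveCycle H (e x) := by
  obtain ⟨v, huv, hpath⟩ := h
  exact ⟨e v, e.map_adj huv, hpath.map e he⟩

end Paths

section Detour

open SimpleGraph

variable {V W : Type*} {G : SimpleGraph V} {H : SimpleGraph W} {f : V → V}

theorem disjoint_support_map {e e' : G →g H} (hne : ∀ u v, e u ≠ e' v) {u v w t : V}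
    (p : G.Walk u v) (q : G.Walk w t) : (p.map e).support.Disjoint (q.map e').support := by
  simp only [List.disjoint_left, Walk.support_map, List.mem_map]
  rintro _ ⟨z, -, rfl⟩ ⟨z', -, h⟩
  exact hne z z' h.symm

theorem HasPath.cross {e e' : G ↪g H} (hne : ∀ u v, e u ≠ e' v) {u v w t : V} {a d : ℕ}
    (hvw : H.Adj (e v) (e' w)) (huv : HasPath G u v a) (hwt : HasPath G w t d) :
    HasPath H (e u) (e' t) (a + d + 1) := by
  obtain ⟨p, hp, rfl⟩ := huv
  obtain ⟨q, hq, rfl⟩ := hwt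
  refine ⟨(p.map e.toHom).append (.cons hvw (q.map e'.toHom)), ?_, by simp [add_assoc]⟩
  rw [isPath_append_cons_iff]
  exact ⟨hp.map e.injective, hq.map e'.injective, disjoint_support_map hne p q⟩

/-- The subgraph of `G` formed by the edges that `f` maps to edges of `G`. -/
def preservedEdges (G : SimpleGraph V) (f : V → V) : SimpleGraph V :=
  G ⊓ G.comap f

/-- The map `f`, as a homomorphism to `G` from the subgraph of edges that it preserves. -/
def preservedEdgesHom (G : SimpleGraph V) (f : V → V) : preservedEdges G f →g G where
  toFun := f
  map_rel' h := h.2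

theorem HasPath.detour {e e' : G ↪g H} (hne : ∀ u v, e u ≠ e' v)
    (hadj : ∀ u, H.Adj (e u) (e' (f u))) (hmeets : MeetsTwoPaths (preservedEdges G f) G)
    {x y : V} {a d : ℕ} (ha : 2 ≤ a) (hxy : HasPath G x y a)
    (hd : ∀ ⦃u v⦄, G.Adj u v → HasPath G u v d) :
    HasPath H (e x) (e y) (a + d + 1) := by
  obtain ⟨p, hp, rfl⟩ := hxy
  obtain ⟨u, v, h, p₁, p₂, rfl, huv⟩ := hmeets.exists_eq_append_cons hp ha
  obtain ⟨hp₁, hp₂, hdisj⟩ := (isPath_append_cons_iff h).1 hp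
  obtain ⟨r, hr, rfl⟩ := hd huv.2
  refine ⟨(p₁.map e.toHom).append (.cons (hadj u)
    ((r.map e'.toHom).append (.cons (hadj v).symm (p₂.map e.toHom)))), ?_, ?_⟩
  · have hdisj' : (p₁.map e.toHom).support.Disjoint (p₂.map e.toHom).support := by
      rw [Walk.support_map, Walk.support_map]
      exact List.disjoint_map e.injective hdisj
    rw [isPath_append_cons_iff, isPath_append_cons_iff, Walk.support_append, Walk.support_cons,
      List.tail_cons, List.disjoint_append_right]
    exact ⟨hp₁.map e.injective, ⟨hr.map e'.injective, hp₂.map e.injective,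
      disjoint_support_map (fun w z => (hne z w).symm) r p₂⟩, disjoint_support_map hne p₁ r, hdisj'⟩
  · simp only [Walk.length_append, Walk.length_cons, Walk.length_map]
    omega

end Detour

section Prism

open SimpleGraph

variable {V : Type*} {G : SimpleGraph V} {f : V → V} {hf : Function.Involutive f}

/-- The generalized prism over `G`: two copies of `G`, indexed by `Bool`, in which every vertex `u`
of either copy is joined to the vertex `f u` of the other one. Taking `f` to be an involution makes
the two copies play symmetric roles. -/
def generalizedPrism (G : SimpleGraph V) (f : V → V) (hf : Function.Involutive f) :
    SimpleGraph (Bool × V) where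
  Adj p q := p.1 = q.1 ∧ G.Adj p.2 q.2 ∨ p.1 ≠ q.1 ∧ q.2 = f p.2
  symm := ⟨fun p q h => h.imp (fun h => ⟨h.1.symm, h.2.symm⟩)
    fun h => ⟨h.1.symm, by rw [h.2, hf]⟩⟩
  loopless := ⟨fun p h => by simp at h⟩

/-- The inclusion of `G` as the copy with index `b` of the generalized prism. -/
def prismCopy (G : SimpleGraph V) (hf : Function.Involutive f) (b : Bool) :
    G ↪g generalizedPrism G f hf where
  toFun := Prod.mk b
  inj' := Prod.mk_right_injective b
  map_rel_iff' := by simp [generalizedPrism]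

theorem prismCopy_adj_prismCopy {b c : Bool} (hbc : b ≠ c) (u : V) :
    (generalizedPrism G f hf).Adj (prismCopy G hf b u) (prismCopy G hf c (f u)) :=
  Or.inr ⟨hbc, rfl⟩

theorem fst_eq_or_fst_eq_of_generalizedPrism_adj {p q r : Bool × V}
    (hpq : (generalizedPrism G f hf).Adj p q) (hqr : (generalizedPrism G f hf).Adj q r)
    (hpr : p ≠ r) : p.1 = q.1 ∨ q.1 = r.1 := by
  by_contra! hne
  have hq : q.2 = f p.2 := (hpq.resolve_left (hne.1 ·.1)).2
  have hr : r.2 = f q.2 := (hqr.resolve_left (hne.2 ·.1)).2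
  have hpr₁ : p.1 = r.1 :=
    (Bool.eq_not_of_ne hne.1).trans (Bool.eq_not_of_ne hne.2.symm).symm
  exact hpr (Prod.ext hpr₁ (by rw [hr, hq, hf]))

theorem prismCopy_ne_prismCopy {b c : Bool} (hbc : b ≠ c) (u v : V) :
    prismCopy G hf b u ≠ prismCopy G hf c v :=
  fun h => hbc (congrArg Prod.fst h)

theorem exists_add_add_one_eq {N k : ℕ} (hN : 7 ≤ N) (hk : N ≤ k) (hk' : k < 2 * N) :
    ∃ a d, (5 ≤ a ∧ a < N) ∧ (1 ≤ d ∧ d < N ∧ d ≠ 2 ∧ d ≠ 4) ∧ a + d + 1 = k := by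
  by_cases hd : k = N ∨ k = N + 2 ∨ k = N + 4
  · exact ⟨N - 2, k + 1 - N, by omega⟩
  · exact ⟨N - 1, k - N, by omega⟩

namespace AlmostEdgePancyclic

variable {N k : ℕ}

theorem hasPath_of_adj (hG : AlmostEdgePancyclic G N) (hN : 7 ≤ N)
    (hmeets : MeetsTwoPaths (preservedEdges G f) G) {u v : V} (huv : G.Adj u v) (b : Bool)
    (hk : 1 ≤ k) (hkN : k < 2 * N) (h2 : k ≠ 2) (h4 : k ≠ 4) :
    HasPath (generalizedPrism G f hf) (prismCopy G hf b u) (prismCopy G hf b v) k := by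
  by_cases hk' : k < N
  · exact (hG huv hk hk' h2 h4).map (prismCopy G hf b).toHom (prismCopy G hf b).injective
  · obtain ⟨a, d, ⟨ha, haN⟩, ⟨hd, hdN, hd2, hd4⟩, rfl⟩ :=
      exists_add_add_one_eq hN (not_lt.1 hk') hkN
    have hb : b ≠ !b := by simp
    exact .detour (prismCopy_ne_prismCopy hb) (prismCopy_adj_prismCopy hb) hmeets (by omega)
      (hG huv (by omega) haN (by omega) (by omega))
      fun _ _ h => hG h hd hdN hd2 hd4

theorem hasPath_of_ne (hG : AlmostEdgePancyclic G N) (hN : 7 ≤ N) {u : V}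
    (hfive : LiesOnFiveCycle (preservedEdges G f) u) {b c : Bool} (hbc : b ≠ c)
    (hk : 1 ≤ k) (hkN : k < 2 * N) (h2 : k ≠ 2) (h4 : k ≠ 4) :
    HasPath (generalizedPrism G f hf) (prismCopy G hf b u) (prismCopy G hf c (f u)) k := by
  obtain ⟨v, huv, hpath⟩ := hfive
  have hreturn : ∀ d, 1 ≤ d → d < N → d ≠ 2 → HasPath G (f v) (f u) d := by
    intro d hd hdN hd2
    by_cases hd4 : d = 4
    · exact hd4 ▸ hpath.symm.map (preservedEdgesHom G f) hf.injective
    · exact hG huv.2.symm hd hdN hd2 hd4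
  have hcross : ∀ {a d}, HasPath G u v a → HasPath G (f v) (f u) d →
      HasPath (generalizedPrism G f hf) (prismCopy G hf b u) (prismCopy G hf c (f u)) (a + d + 1) :=
    .cross (prismCopy_ne_prismCopy hbc) (prismCopy_adj_prismCopy hbc v)
  rcases lt_or_ge k N with hk' | hk'
  · obtain rfl | ⟨d, rfl⟩ : k = 1 ∨ ∃ d, k = 1 + d + 1 := by
      rcases k with - | - | d <;> grind
    · exact .of_adj (prismCopy_adj_prismCopy hbc u)
    · exact hcross (.of_adj huv.1) (hreturn d (by omega) (by omega) (by omega))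
  · obtain ⟨a, d, ⟨ha, haN⟩, ⟨hd, hdN, hd2, -⟩, rfl⟩ := exists_add_add_one_eq hN hk' hkN
    exact hcross (hG huv.1 (by omega) haN (by omega) (by omega)) (hreturn d hd hdN hd2)

theorem generalizedPrism (hG : AlmostEdgePancyclic G N) (hN : 7 ≤ N)
    (hmeets : MeetsTwoPaths (preservedEdges G f) G)
    (hfive : ∀ u, LiesOnFiveCycle (preservedEdges G f) u) :
    AlmostEdgePancyclic (generalizedPrism G f hf) (2 * N) := by
  rintro ⟨b, u⟩ ⟨c, v⟩ (⟨rfl, huv⟩ | ⟨hbc, rfl⟩) k hk hkN h2 h4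
  · exact hG.hasPath_of_adj hN hmeets huv b hk hkN h2 h4
  · exact hG.hasPath_of_ne hN (hfive u) hbc hk hkN h2 h4

end AlmostEdgePancyclic

end Prism

section MobiusLadder

open SimpleGraph

theorem HasPath.circulantGraph_translate {A : Type*} [AddGroup A] {s : Set A} {x y : A} {k : ℕ}
    (h : HasPath (circulantGraph s) x y k) (d : A) :
    HasPath (circulantGraph s) (x + d) (y + d) k :=
  h.map ⟨(· + d), circulantGraph_adj_translate.2⟩ (add_left_injective d)

/-- The Möbius ladder on eight vertices, also known as the Wagner graph: an 8-cycle together with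
its four long diagonals. -/
abbrev wagnerGraph : SimpleGraph (ZMod 8) :=
  circulantGraph {1, 4}

theorem wagnerGraph_hasPath_zero_one {k : ℕ} (hk : 1 ≤ k) (hk8 : k < 8) (h2 : k ≠ 2) :
    HasPath wagnerGraph 0 1 k := by
  interval_cases k
  · exact .of_isChain (l := [0, 1]) (by simp) (by decide) (by decide)
  · contradiction
  · exact .of_isChain (l := [0, 4, 5, 1]) (by simp) (by decide) (by decide)
  · exact .of_isChain (l := [0, 4, 3, 2, 1]) (by simp) (by decide) (by decide)
  · exact .of_isChain (l := [0, 4, 5, 6, 2, 1]) (by simp) (by decide) (by decide)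
  · exact .of_isChain (l := [0, 4, 3, 7, 6, 2, 1]) (by simp) (by decide) (by decide)
  · exact .of_isChain (l := [0, 7, 6, 5, 4, 3, 2, 1]) (by simp) (by decide) (by decide)

theorem wagnerGraph_hasPath_zero_four {k : ℕ} (hk : 1 ≤ k) (hk8 : k < 8) (h2 : k ≠ 2) :
    HasPath wagnerGraph 0 4 k := by
  interval_cases k
  · exact .of_isChain (l := [0, 4]) (by simp) (by decide) (by decide)
  · contradiction
  · exact .of_isChain (l := [0, 1, 5, 4]) (by simp) (by decide) (by decide)
  · exact .of_isChain (l := [0, 1, 2, 3, 4]) (by simp) (by decide) (by decide)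
  · exact .of_isChain (l := [0, 1, 2, 6, 5, 4]) (by simp) (by decide) (by decide)
  · exact .of_isChain (l := [0, 1, 2, 6, 7, 3, 4]) (by simp) (by decide) (by decide)
  · exact .of_isChain (l := [0, 1, 2, 3, 7, 6, 5, 4]) (by simp) (by decide) (by decide)

theorem wagnerGraph_hasPath {x y : ZMod 8} (hxy : wagnerGraph.Adj x y) {k : ℕ} (hk : 1 ≤ k)
    (hk8 : k < 8) (h2 : k ≠ 2) : HasPath wagnerGraph x y k := by
  wlog h : y - x ∈ ({1, 4} : Set (ZMod 8)) generalizing x y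
  · exact (this hxy.symm (hxy.2.resolve_right h)).symm
  have hzero : HasPath wagnerGraph 0 (y - x) k := by
    rcases h with h | h <;> rw [h]
    · exact wagnerGraph_hasPath_zero_one hk hk8 h2
    · exact wagnerGraph_hasPath_zero_four hk hk8 h2
  simpa using hzero.circulantGraph_translate x

theorem wagnerGraph_almostEdgePancyclic : AlmostEdgePancyclic wagnerGraph 8 :=
  fun _ _ hxy _ hk hk8 h2 _ => wagnerGraph_hasPath hxy hk hk8 h2

theorem wagnerGraph_liesOnFiveCycle (x : ZMod 8) : LiesOnFiveCycle wagnerGraph x := by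
  have hadj : wagnerGraph.Adj x (x + 1) := by simp [show (1 : ZMod 8) ≠ 0 by decide]
  exact ⟨x + 1, hadj, wagnerGraph_hasPath hadj (by simp) (by simp) (by simp)⟩

end MobiusLadder

section VarietalCube

open SimpleGraph

variable {n : ℕ}

theorem vqCross_iff {a b c d : Bool} : vqCross (a, b) (c, d) ↔ c = a ∧ d = (b ^^ a) := by
  unfold vqCross
  revert a b c d
  decide

theorem vqCross_symm {p q : Bool × Bool} (h : vqCross p q) : vqCross q p := by
  unfold vqCross at *
  tauto

theorem not_vqAdj_self : ∀ (n : ℕ) (x : Fin n → Bool), ¬vqAdj n x x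
  | 0, _ => id
  | 1, _ => fun h => h rfl
  | n + 2, x => by simpa [vqAdj] using not_vqAdj_self (n + 1) _

theorem vqAdj_symm : ∀ {n : ℕ} {x y : Fin n → Bool}, vqAdj n x y → vqAdj n y x
  | 0, _, _ => id
  | 1, _, _ => Ne.symm
  | n + 2, x, y => by
    simp only [vqAdj, eq_comm (a := y (Fin.last (n + 1)))]
    split_ifs
    · exact vqAdj_symm
    · exact fun h => ⟨fun i hi => (h.1 i hi).symm, vqCross_symm h.2⟩
    · exact fun h i => (h i).symm

theorem varietalCube_adj {x y : Fin n → Bool} : (varietalCube n).Adj x y ↔ vqAdj n x y := by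
  rw [varietalCube, fromRel_adj]
  refine ⟨fun h => h.2.elim id vqAdj_symm, fun h => ⟨?_, .inl h⟩⟩
  rintro rfl
  exact not_vqAdj_self n x h

/-- The matching between the two copies of `VQ_n` in `VQ_{n+1}`: the pair of leading bits
`x_n x_{n-1}` is replaced by its partner under the relation `I` if `3 ∣ n + 1`, so that `x_{n-1}`
becomes `x_{n-1} ^^ x_n`, and nothing happens otherwise. -/
def twist (n : ℕ) (x : Fin n → Bool) : Fin n → Bool := fun i =>
  if h : 3 ∣ n + 1 ∧ i.val + 2 = n then x i ^^ x ⟨i + 1, by omega⟩ else x i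

theorem twist_of_not_dvd (h : ¬3 ∣ n + 1) : twist n = id := by
  funext x i
  simp [twist, h]

theorem twist_involutive (n : ℕ) : Function.Involutive (twist n) := by
  intro x
  funext i
  by_cases h : 3 ∣ n + 1 ∧ i.val + 2 = n
  · have hnext : ¬i.val + 1 + 2 = n := by omega
    simp [twist, h, hnext]
  · simp [twist, h]

theorem eq_twist_iff_of_dvd (h3 : 3 ∣ n + 3) {x y : Fin (n + 2) → Bool} :
    y = twist (n + 2) x ↔ (∀ i : Fin n, x i.castSucc.castSucc = y i.castSucc.castSucc) ∧
      vqCross (x (Fin.last (n + 1)), x (Fin.last n).castSucc)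
        (y (Fin.last (n + 1)), y (Fin.last n).castSucc) := by
  have hlow (i : Fin n) : n ≠ i.val := i.isLt.ne'
  have hnext : (⟨n + 1, by omega⟩ : Fin (n + 2)) = Fin.last (n + 1) := rfl
  simp [funext_iff, Fin.forall_fin_succ', twist, h3, hlow, hnext, vqCross_iff, eq_comm, and_assoc,
    and_comm]

theorem varietalCube_adj_succ {x y : Fin (n + 1) → Bool} :
    (varietalCube (n + 1)).Adj x y ↔
      x (Fin.last n) = y (Fin.last n) ∧ (varietalCube n).Adj (Fin.init x) (Fin.init y) ∨
      x (Fin.last n) ≠ y (Fin.last n) ∧ Fin.init y = twist n (Fin.init x) := by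
  simp only [varietalCube_adj]
  match n with
  | 0 => simp [vqAdj, funext_iff]
  | n + 1 =>
    rw [vqAdj]
    split_ifs with hlast h3
    · simp only [hlast, true_and, ne_eq, not_true_eq_false, false_and, or_false]
      rfl
    · obtain ⟨m, rfl⟩ : ∃ m, n = m + 1 := ⟨n - 1, by omega⟩
      simp only [hlast, false_and, false_or, ne_eq, not_false_eq_true, true_and,
        eq_twist_iff_of_dvd h3]
      exact and_congr ⟨fun h i => h _ i.isLt, fun h i hi => h ⟨i, hi⟩⟩ Iff.rfl
    · simp only [hlast, false_and, false_or, ne_eq, not_false_eq_true, true_and,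
        twist_of_not_dvd h3, id_eq, funext_iff, eq_comm]
      rfl

/-- The flip of the leading bit. -/
def flipLeading (x : Fin n → Bool) : Fin n → Bool := fun i =>
  if i.val + 1 = n then !x i else x i

theorem varietalCube_adj_flipLeading : ∀ {n : ℕ} {x y : Fin n → Bool},
    (varietalCube n).Adj x y → (varietalCube n).Adj (flipLeading x) (flipLeading y)
  | 0, _, _, h => absurd (Subsingleton.elim _ _) h.ne
  | n + 1, x, y, h => by
    have hlast (z : Fin (n + 1) → Bool) : flipLeading z (Fin.last n) = !z (Fin.last n) := by
      simp [flipLeading]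
    have hinit (z : Fin (n + 1) → Bool) : Fin.init (flipLeading z) = Fin.init z := by
      funext i
      simp [flipLeading, Fin.init, i.isLt.ne]
    simpa [varietalCube_adj_succ, hlast, hinit] using h

theorem twist_last (x : Fin (n + 1) → Bool) : twist (n + 1) x (Fin.last n) = x (Fin.last n) := by
  simp [twist]

theorem init_twist (x : Fin (n + 1) → Bool) :
    Fin.init (twist (n + 1) x) =
      if 3 ∣ n + 2 ∧ x (Fin.last n) then flipLeading (Fin.init x) else Fin.init x := by
  funext i
  by_cases h3 : 3 ∣ n + 2
  · by_cases hi : i.val + 1 = n <;> cases hx : x (Fin.last n) <;>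
      simp_all [twist, flipLeading, Fin.init, Fin.last]
  · simp [twist_of_not_dvd h3, h3]

theorem preservedEdges_adj_of_last_eq {x y : Fin (n + 1) → Bool}
    (hxy : (varietalCube (n + 1)).Adj x y) (hlast : x (Fin.last n) = y (Fin.last n)) :
    (preservedEdges (varietalCube (n + 1)) (twist (n + 1))).Adj x y := by
  have hinit := ((varietalCube_adj_succ.1 hxy).resolve_right fun h => h.1 hlast).2
  refine ⟨hxy, varietalCube_adj_succ.2 (.inl ⟨?_, ?_⟩)⟩
  · rwa [twist_last, twist_last]
  · rw [init_twist, init_twist, hlast]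
    split_ifs
    · exact varietalCube_adj_flipLeading hinit
    · exact hinit

/-- `VQ_{n+1}` as a generalized prism over `VQ_n`, the leading bit being the index of the copy. -/
def varietalCubeSuccIso (n : ℕ) :
    generalizedPrism (varietalCube n) (twist n) (twist_involutive n) ≃g varietalCube (n + 1) where
  toEquiv := Fin.snocEquiv fun _ => Bool
  map_rel_iff' := by
    have hinit (b : Bool) (u : Fin n → Bool) :
        Fin.init (Fin.snocEquiv (fun _ => Bool) (b, u)) = u :=
      Fin.init_snoc (α := fun _ => Bool) b u
    simp [varietalCube_adj_succ, generalizedPrism, hinit]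

theorem meetsTwoPaths_preservedEdges (n : ℕ) :
    MeetsTwoPaths (preservedEdges (varietalCube (n + 1)) (twist (n + 1)))
      (varietalCube (n + 1)) := by
  intro u v w huv hvw huw
  let e := (varietalCubeSuccIso n).symm
  exact (fst_eq_or_fst_eq_of_generalizedPrism_adj (e.map_adj_iff.2 huv) (e.map_adj_iff.2 hvw)
    (e.injective.ne huw)).imp (preservedEdges_adj_of_last_eq huv)
    (preservedEdges_adj_of_last_eq hvw)

/-- The vertices of `VQ_3` in the order of a Hamiltonian cycle, each written as `![x_1, x_2, x_3]`.
Vertices four apart on the cycle differ in `x_1` alone. -/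
def varietalCubeThreeCycle : ZMod 8 → Fin 3 → Bool :=
  ![![false, false, false], ![false, true, false], ![true, true, true], ![true, false, true],
    ![true, false, false], ![true, true, false], ![false, true, true], ![false, false, true]]

theorem varietalCubeThreeCycle_bijective : Function.Bijective varietalCubeThreeCycle :=
  (Fintype.bijective_iff_injective_and_card _).2 ⟨fun i j => by revert i j; decide, by simp⟩

/-- `VQ_3` as a Möbius ladder, with the edges in direction `x_1` as the long diagonals. -/
noncomputable def wagnerGraphIso : wagnerGraph ≃g varietalCube 3 where
  toEquiv := .ofBijective varietalCubeThreeCycle varietalCubeThreeCycle_bijective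
  map_rel_iff' {i j} := by
    simp only [varietalCube_adj, vqAdj, vqCross_iff, Equiv.ofBijective_apply]
    revert i j
    decide

/-- The inclusion of `VQ_n` as the copy with leading bit `b` of `VQ_{n+1}`. -/
def varietalCubeCopy (n : ℕ) (b : Bool) :
    varietalCube n →g preservedEdges (varietalCube (n + 1)) (twist (n + 1)) where
  toFun x := Fin.snoc (α := fun _ => Bool) x b
  map_rel' h := preservedEdges_adj_of_last_eq
    (by simpa [varietalCube_adj_succ] using h) (by simp)

theorem varietalCubeCopy_injective (n : ℕ) (b : Bool) :
    Function.Injective (varietalCubeCopy n b) :=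
  Fin.snoc_left_injective (α := fun _ => Bool) b

theorem liesOnFiveCycle_preservedEdges_succ (h : ∀ x, LiesOnFiveCycle (varietalCube n) x)
    (x : Fin (n + 1) → Bool) :
    LiesOnFiveCycle (preservedEdges (varietalCube (n + 1)) (twist (n + 1))) x := by
  rw [← Fin.snoc_init_self x]
  exact (h (Fin.init x)).map (varietalCubeCopy n _) (varietalCubeCopy_injective n _)

theorem varietalCube_liesOnFiveCycle (hn : 3 ≤ n) (x : Fin n → Bool) :
    LiesOnFiveCycle (varietalCube n) x := by
  induction n, hn using Nat.le_induction with
  | base =>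
    simpa using (wagnerGraph_liesOnFiveCycle (wagnerGraphIso.symm x)).map wagnerGraphIso.toHom
      wagnerGraphIso.injective
  | succ n _ ih =>
    exact (liesOnFiveCycle_preservedEdges_succ ih x).map (Hom.ofLE inf_le_left)
      Function.injective_id

theorem liesOnFiveCycle_preservedEdges (hn : 3 ≤ n) (x : Fin n → Bool) :
    LiesOnFiveCycle (preservedEdges (varietalCube n) (twist n)) x := by
  by_cases h3 : 3 ∣ n + 1
  · obtain ⟨m, rfl⟩ : ∃ m, n = m + 1 := ⟨n - 1, by omega⟩
    exact liesOnFiveCycle_preservedEdges_succ (varietalCube_liesOnFiveCycle (by omega)) x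
  · have htwist : preservedEdges (varietalCube n) (twist n) = varietalCube n := by
      simp [preservedEdges, twist_of_not_dvd h3]
    rw [htwist]
    exact varietalCube_liesOnFiveCycle hn x

theorem varietalCube_almostEdgePancyclic (hn : 3 ≤ n) :
    AlmostEdgePancyclic (varietalCube n) (2 ^ n) := by
  induction n, hn using Nat.le_induction with
  | base => exact wagnerGraph_almostEdgePancyclic.of_iso wagnerGraphIso
  | succ n hn ih =>
    have hN : 7 ≤ 2 ^ n := le_trans (by norm_num) (Nat.pow_le_pow_right two_pos hn)
    have hmeets : MeetsTwoPaths (preservedEdges (varietalCube n) (twist n)) (varietalCube n) := by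
      obtain ⟨m, rfl⟩ : ∃ m, n = m + 1 := ⟨n - 1, by omega⟩
      exact meetsTwoPaths_preservedEdges m
    rw [pow_succ']
    exact (ih.generalizedPrism hN hmeets (liesOnFiveCycle_preservedEdges hn)).of_iso
      (varietalCubeSuccIso n)

end VarietalCube

/-- For `n ≥ 3` and adjacent vertices `x, y` of `VQ_n`, there is an `xy`-path of
every length `ℓ` with `1 ≤ ℓ ≤ 2^n - 1` and `ℓ ∉ {2, 4}`. -/
theorem stmt2 (n : ℕ) (hn : 3 ≤ n) (x y : Fin n → Bool)
    (hadj : (varietalCube n).Adj x y) (ℓ : ℕ)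
    (hl : 1 ≤ ℓ) (hu : ℓ ≤ 2 ^ n - 1) (h2 : ℓ ≠ 2) (h4 : ℓ ≠ 4) :
    ∃ p : (varietalCube n).Walk x y, p.IsPath ∧ p.length = ℓ :=
  varietalCube_almostEdgePancyclic hn hadj hl (Nat.lt_of_le_sub_one (by positivity) hu) h2 h4
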